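/- Let (X_n, p_{n+1}) be a tower of fibrations of pointed spaces with a chosen basepoint of lim_n X_n, and let k ≥ 0. Then the function φ̃ : Ker P → lim¹_n π_{k+1}X_n is injective: if α, ᾱ : I^k → lim_n X_n send ∂I^k to the basepoint, their classes lie in the kernel of P : π_k(lim_n X_n) → lim_n π_k X_n, and φ̃([α]) = φ̃([ᾱ]) in lim¹_n π_{k+1}X_n, then α and ᾱ are homotopic relative to ∂I^k, i.e., [α] = [ᾱ] in π_k(lim_n X_n). -/

import Mathlib

open scoped unitInterval Topology Topology.Homotopy

noncomputable section

/-- A map is a *Serre fibration* if it has the homotopy lifting property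
with respect to all cubes `I^k`. -/
def IsSerreFibration {E B : Type} [TopologicalSpace E] [TopologicalSpace B]
    (p : C(E, B)) : Prop :=
  ∀ (k : ℕ) (f : C((Fin k → I), E)) (H : C(I × (Fin k → I), B)),
    (∀ q, H (0, q) = p (f q)) →
      ∃ G : C(I × (Fin k → I), E),
        (∀ q, G (0, q) = f q) ∧ ∀ z, p (G z) = H z

/-- The inverse limit of a tower of spaces. -/
def TowerLim (X : ℕ → Type) [∀ n, TopologicalSpace (X n)]
    (p : ∀ n, C(X (n + 1), X n)) : Type :=
  { z : ∀ n, X n // ∀ n, p n (z (n + 1)) = z n }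

instance {X : ℕ → Type} [∀ n, TopologicalSpace (X n)] (p : ∀ n, C(X (n + 1), X n)) :
    TopologicalSpace (TowerLim X p) :=
  instTopologicalSpaceSubtype

/-- The projection from the inverse limit of a tower to the `n`th space. -/
def TowerLim.proj {X : ℕ → Type} [∀ n, TopologicalSpace (X n)]
    {p : ∀ n, C(X (n + 1), X n)} (n : ℕ) : C(TowerLim X p, X n) :=
  ⟨fun z => z.1 n, (continuous_apply n).comp continuous_subtype_val⟩

/-- The map induced on homotopy groups (in particular on `π_k` for `N = Fin k`)
by a continuous map `f` with `f x = y`. -/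
def piMap {X Y : Type} [TopologicalSpace X] [TopologicalSpace Y] (N : Type)
    (f : C(X, Y)) {x : X} {y : Y} (hf : f x = y) :
    HomotopyGroup N X x → HomotopyGroup N Y y :=
  Quotient.map
    (fun g => (⟨f.comp g.1, fun q hq => by
        rw [ContinuousMap.comp_apply, g.2 q hq, hf]⟩ : GenLoop N Y y))
    (fun g h H => H.map fun F => F.compContinuousMap f)


/-- The map `π_k (lim_n X_n) → π_k (X n)` induced by the projection `TowerLim.proj n`,
for the basepoint `⟨x, hx⟩` of the inverse limit. -/
def piProjMap {X : ℕ → Type} [∀ n, TopologicalSpace (X n)] {p : ∀ n, C(X (n + 1), X n)}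
    (k : ℕ) {x : ∀ n, X n} (hx : ∀ n, p n (x (n + 1)) = x n) (n : ℕ) :
    HomotopyGroup (Fin k) (TowerLim X p) (⟨x, hx⟩ : TowerLim X p) →
      HomotopyGroup (Fin k) (X n) (x n) :=
  piMap (Fin k) (TowerLim.proj n) rfl

/-- The map `π_k (X (n+1)) → π_k (X n)` induced by the map `p n` of the tower. -/
def piTowerMap {X : ℕ → Type} [∀ n, TopologicalSpace (X n)] {p : ∀ n, C(X (n + 1), X n)}
    (k : ℕ) {x : ∀ n, X n} (hx : ∀ n, p n (x (n + 1)) = x n) (n : ℕ) :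
    HomotopyGroup (Fin k) (X (n + 1)) (x (n + 1)) → HomotopyGroup (Fin k) (X n) (x n) :=
  piMap (Fin k) (p n) (hx n)

/-- The distinguished basepoint of `HomotopyGroup N X x`: the class of the constant map. -/
def piConst {X : Type} [TopologicalSpace X] (N : Type) (x : X) : HomotopyGroup N X x :=
  ⟦GenLoop.const⟧

/-- The class in `HomotopyGroup N X x` of a generalized loop. -/
def piCls {N X : Type} [TopologicalSpace X] {x : X} (g : GenLoop N X x) :
    HomotopyGroup N X x :=
  ⟦g⟧

/-- The generalized loop obtained by composing a generalized loop with a continuous map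
`f` satisfying `f x = y`. -/
def genLoopMap {X Y : Type} [TopologicalSpace X] [TopologicalSpace Y] (N : Type)
    (f : C(X, Y)) {x : X} {y : Y} (hf : f x = y) (g : GenLoop N X x) : GenLoop N Y y :=
  ⟨f.comp g.1, fun q hq => by rw [ContinuousMap.comp_apply, g.2 q hq, hf]⟩

/-- `β : I^{k+1} → X` is a *nullhomotopy* of the generalized loop `α : I^k → X`
(writing points of `I^{k+1}` as `(p, t)` with `t` the last coordinate):
`β (p, 0) = x` for all `p`, `β (p, 1) = α p` for all `p`, and `β (p, t) = x`
for all `p ∈ ∂I^k`. -/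
def IsNullhomotopy {k : ℕ} {X : Type} [TopologicalSpace X] {x : X}
    (α : GenLoop (Fin k) X x) (β : C((Fin (k + 1) → I), X)) : Prop :=
  (∀ q : Fin (k + 1) → I, q (Fin.last k) = 0 → β q = x) ∧
  (∀ q : Fin (k + 1) → I, q (Fin.last k) = 1 → β q = α fun i => q i.castSucc) ∧
  (∀ q : Fin (k + 1) → I, (∃ i : Fin k, q i.castSucc = 0 ∨ q i.castSucc = 1) → β q = x)

/-- `c = β * (f ∘ β'⁻¹)` : the concatenation, in the last coordinate of the cube `I^{k+1}`,
of `β` with the reverse (in the last coordinate) of `f ∘ β'`. -/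
def IsGluedWithReverse {k : ℕ} {X Y : Type} [TopologicalSpace X] [TopologicalSpace Y]
    (β : C((Fin (k + 1) → I), X)) (f : C(Y, X)) (β' : C((Fin (k + 1) → I), Y))
    (c : (Fin (k + 1) → I) → X) : Prop :=
  ∀ q : Fin (k + 1) → I, c q =
    if (q (Fin.last k) : ℝ) ≤ 1 / 2 then
      β (Function.update q (Fin.last k)
        (Set.projIcc 0 1 zero_le_one (2 * (q (Fin.last k) : ℝ))))
    else
      f (β' (Function.update q (Fin.last k)
        (Set.projIcc 0 1 zero_le_one (2 - 2 * (q (Fin.last k) : ℝ)))))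

open GenLoop

/-! ### The relative homotopy lifting property -/

/-- Affine clamp of a real number to the unit interval. -/
def clampI (r : ℝ) : I := Set.projIcc 0 1 zero_le_one r

theorem continuous_clampI : Continuous clampI := continuous_projIcc (h := zero_le_one)

theorem clampI_coe {r : ℝ} (h0 : 0 ≤ r) (h1 : r ≤ 1) : (clampI r : ℝ) = r := by
  unfold clampI
  rw [Set.projIcc_of_mem zero_le_one ⟨h0, h1⟩]

/-- Sup-norm distance of a point of the cube from the centre, rescaled. -/
def cubeNorm {m : ℕ} (q : Fin m → I) : ℝ := ‖fun i => 2 * (q i : ℝ) - 1‖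

theorem continuous_cubeNorm {m : ℕ} : Continuous (cubeNorm (m := m)) := by
  unfold cubeNorm
  fun_prop

theorem abs_le_cubeNorm {m : ℕ} (q : Fin m → I) (i : Fin m) :
    |2 * (q i : ℝ) - 1| ≤ cubeNorm q :=
  norm_le_pi_norm (fun i => 2 * (q i : ℝ) - 1) i

theorem cubeNorm_le {m : ℕ} (q : Fin m → I) : cubeNorm q ≤ 1 := by
  refine (pi_norm_le_iff_of_nonneg zero_le_one).2 fun i => ?_
  rw [Real.norm_eq_abs, abs_le]
  constructor <;> linarith [(q i).2.1, (q i).2.2]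

theorem exists_abs_eq {m : ℕ} (q : Fin m → I) (h : 0 < cubeNorm q) :
    ∃ i, |2 * (q i : ℝ) - 1| = cubeNorm q := by
  by_contra hc
  push Not at hc
  have := (pi_norm_lt_iff (x := fun i => 2 * (q i : ℝ) - 1) h).2
    fun i => lt_of_le_of_ne (abs_le_cubeNorm q i) (hc i)
  exact lt_irrefl _ this

theorem cubeNorm_of_boundary {m : ℕ} (q : Fin m → I) (h : q ∈ Cube.boundary (Fin m)) :
    cubeNorm q = 1 := by
  refine le_antisymm (cubeNorm_le q) ?_
  obtain ⟨i, hi⟩ := h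
  refine le_trans ?_ (abs_le_cubeNorm q i)
  rcases hi with hi | hi <;> rw [hi] <;> norm_num

/-- The gauge of the radial projection. -/
def gaugeM {m : ℕ} (s : I) (q : Fin m → I) : ℝ := max (1 - (s : ℝ) / 2) (cubeNorm q)

theorem gaugeM_half {m : ℕ} (s : I) (q : Fin m → I) : 1 / 2 ≤ gaugeM s q :=
  le_trans (by linarith [s.2.2]) (le_max_left _ _)

theorem gaugeM_le {m : ℕ} (s : I) (q : Fin m → I) : gaugeM s q ≤ 1 :=
  max_le (by linarith [s.2.1]) (cubeNorm_le q)

/-- The radial stretching factor. -/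
def lam {m : ℕ} (t s : I) (q : Fin m → I) : ℝ := 1 / min 1 (gaugeM s q + t)

theorem lam_den_pos {m : ℕ} (t s : I) (q : Fin m → I) : 0 < min 1 (gaugeM s q + t) :=
  lt_min one_pos (by linarith [gaugeM_half s q, t.2.1])

theorem continuous_lam {m : ℕ} :
    Continuous fun z : I × I × (Fin m → I) => lam z.1 z.2.1 z.2.2 := by
  have : Continuous (fun z : I × I × (Fin m → I) => cubeNorm z.2.2) :=
    continuous_cubeNorm.comp (by fun_prop)
  unfold lam
  refine Continuous.div continuous_const ?_ fun z => (lam_den_pos _ _ _).ne'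
  unfold gaugeM
  fun_prop

theorem one_le_lam {m : ℕ} (t s : I) (q : Fin m → I) : 1 ≤ lam t s q := by
  unfold lam
  rw [le_div_iff₀ (lam_den_pos t s q), one_mul]
  exact min_le_left _ _

theorem lam_mul_le {m : ℕ} (t s : I) (q : Fin m → I) : lam t s q * gaugeM s q ≤ 1 := by
  unfold lam
  rw [div_mul_eq_mul_div, one_mul, div_le_one (lam_den_pos t s q)]
  exact le_min (gaugeM_le s q) (by linarith [t.2.1])

theorem lam_zero {m : ℕ} (s : I) (q : Fin m → I) : lam 0 s q * gaugeM s q = 1 := by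
  unfold lam
  have := gaugeM_half s q
  rw [Set.Icc.coe_zero, add_zero, min_eq_right (gaugeM_le s q), one_div,
    inv_mul_cancel₀ (by linarith)]

/-- The time coordinate of the radial flow. -/
def flowT {m : ℕ} (t s : I) (q : Fin m → I) : I := clampI (2 - lam t s q * (2 - s))

/-- The cube coordinate of the radial flow. -/
def flowQ {m : ℕ} (t s : I) (q : Fin m → I) : Fin m → I :=
  fun i => clampI ((1 + lam t s q * (2 * (q i : ℝ) - 1)) / 2)

theorem continuous_flowT {m : ℕ} :
    Continuous fun z : I × I × (Fin m → I) => flowT z.1 z.2.1 z.2.2 := by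
  have := continuous_lam (m := m)
  unfold flowT
  refine continuous_clampI.comp ?_
  fun_prop

theorem continuous_flowQ {m : ℕ} :
    Continuous fun z : I × I × (Fin m → I) => flowQ z.1 z.2.1 z.2.2 := by
  have := continuous_lam (m := m)
  unfold flowQ
  refine continuous_pi fun i => continuous_clampI.comp ?_
  fun_prop

theorem flowT_coe {m : ℕ} (t s : I) (q : Fin m → I) :
    (flowT t s q : ℝ) = 2 - lam t s q * (2 - s) := by
  have h1 := one_le_lam t s q
  have h2 := lam_mul_le t s q
  have h3 : 1 - (s : ℝ) / 2 ≤ gaugeM s q := le_max_left _ _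
  have hs0 := s.2.1
  have hs1 := s.2.2
  apply clampI_coe
  · nlinarith
  · nlinarith

theorem flowQ_coe {m : ℕ} (t s : I) (q : Fin m → I) (i : Fin m) :
    (flowQ t s q i : ℝ) = (1 + lam t s q * (2 * (q i : ℝ) - 1)) / 2 := by
  have h1 := one_le_lam t s q
  have h2 := lam_mul_le t s q
  have h3 : cubeNorm q ≤ gaugeM s q := le_max_right _ _
  have h4 := abs_le.1 ((abs_le_cubeNorm q i).trans h3)
  apply clampI_coe
  · nlinarith
  · nlinarith

theorem flow_zero {m : ℕ} (s : I) (q : Fin m → I) :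
    flowT 0 s q = 0 ∨ flowQ 0 s q ∈ Cube.boundary (Fin m) := by
  have h := lam_zero s q
  have hM := gaugeM_half s q
  rcases le_total (cubeNorm q) (1 - (s : ℝ) / 2) with hle | hle
  · left
    rw [gaugeM, max_eq_left hle] at h
    apply Subtype.ext
    rw [flowT_coe, Set.Icc.coe_zero]
    linarith
  · right
    have hg : gaugeM s q = cubeNorm q := max_eq_right hle
    obtain ⟨i, hi⟩ := exists_abs_eq q (by linarith)
    refine ⟨i, ?_⟩
    rw [hg, ← hi] at h
    rcases abs_choice (2 * (q i : ℝ) - 1) with ha | ha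
    · right
      rw [ha] at h
      apply Subtype.ext
      rw [flowQ_coe, Set.Icc.coe_one]
      linarith
    · left
      rw [ha] at h
      apply Subtype.ext
      rw [flowQ_coe, Set.Icc.coe_zero]
      linarith

theorem flow_of_lam {m : ℕ} {t s : I} {q : Fin m → I} (h : lam t s q = 1) :
    flowT t s q = s ∧ flowQ t s q = q := by
  refine ⟨Subtype.ext ?_, funext fun i => Subtype.ext ?_⟩
  · rw [flowT_coe, h]; ring
  · rw [flowQ_coe, h]; ring

/-- The time at which the flow returns to the starting point. -/
def flowTime {m : ℕ} (s : I) (q : Fin m → I) : I := clampI (1 - gaugeM s q)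

theorem continuous_flowTime {m : ℕ} :
    Continuous fun z : I × (Fin m → I) => flowTime z.1 z.2 := by
  have : Continuous (fun z : I × (Fin m → I) => cubeNorm z.2) :=
    continuous_cubeNorm.comp (by fun_prop)
  unfold flowTime gaugeM
  refine continuous_clampI.comp ?_
  fun_prop

theorem flowTime_coe {m : ℕ} (s : I) (q : Fin m → I) :
    (flowTime s q : ℝ) = 1 - gaugeM s q :=
  clampI_coe (by linarith [gaugeM_le s q]) (by linarith [gaugeM_half s q])

theorem lam_flowTime {m : ℕ} (s : I) (q : Fin m → I) : lam (flowTime s q) s q = 1 := by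
  unfold lam
  rw [flowTime_coe]
  norm_num

theorem flowTime_eq_zero {m : ℕ} {s : I} {q : Fin m → I}
    (h : s = 0 ∨ q ∈ Cube.boundary (Fin m)) : flowTime s q = 0 := by
  apply Subtype.ext
  rw [flowTime_coe, Set.Icc.coe_zero]
  have := gaugeM_le s q
  have h2 : 1 ≤ gaugeM s q := by
    rcases h with h | h
    · refine le_trans ?_ (le_max_left _ _)
      rw [h]; norm_num
    · exact (cubeNorm_of_boundary q h).ge.trans (le_max_right _ _)
  linarith

/-- Serre fibrations lift homotopies relative to the boundary of a cube. -/
theorem IsSerreFibration.lift_rel {E B : Type} [TopologicalSpace E] [TopologicalSpace B]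
    {p : C(E, B)} (hp : IsSerreFibration p) {m : ℕ} (f : C((Fin m → I), E))
    (H : C(I × (Fin m → I), B)) (h0 : ∀ q, H (0, q) = p (f q))
    (h1 : ∀ s, ∀ q ∈ Cube.boundary (Fin m), H (s, q) = p (f q)) :
    ∃ G : C(I × (Fin m → I), E), (∀ q, G (0, q) = f q) ∧
      (∀ s, ∀ q ∈ Cube.boundary (Fin m), G (s, q) = f q) ∧ ∀ z, p (G z) = H z := by
  have hQ := continuous_flowQ (m := m)
  have hT := continuous_flowT (m := m)
  let F : C((Fin (m + 1) → I), E) :=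
    ⟨fun w => f (flowQ 0 (w 0) (Fin.tail w)), by
      refine f.continuous.comp (hQ.comp (g := fun z : I × I × (Fin m → I) => flowQ z.1 z.2.1 z.2.2)
        (f := fun w : Fin (m + 1) → I => ((0 : I), w 0, Fin.tail w)) ?_)
      unfold Fin.tail
      fun_prop⟩
  let K : C(I × (Fin (m + 1) → I), B) :=
    ⟨fun w => H (flowT w.1 (w.2 0) (Fin.tail w.2), flowQ w.1 (w.2 0) (Fin.tail w.2)), by
      refine H.continuous.comp ((hT.prodMk hQ).comp
        (f := fun w : I × (Fin (m + 1) → I) => (w.1, w.2 0, Fin.tail w.2)) ?_)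
      unfold Fin.tail
      fun_prop⟩
  obtain ⟨G, hG0, hG⟩ := hp (m + 1) F K (by
    intro w
    change H (_, _) = p (f _)
    rcases flow_zero (w 0) (Fin.tail w) with h | h
    · rw [h]; exact h0 _
    · exact h1 _ _ h)
  let cc : I → (Fin m → I) → (Fin (m + 1) → I) := fun s q => Fin.cons (α := fun _ => I) s q
  have hcc : Continuous fun z : I × (Fin m → I) => cc z.1 z.2 :=
    Continuous.finCons (A := fun _ => I) continuous_fst continuous_snd
  have key : ∀ s q, (s = 0 ∨ q ∈ Cube.boundary (Fin m)) →
      G (flowTime s q, cc s q) = f q := by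
    intro s q h
    have ht := flowTime_eq_zero h
    have hl := lam_flowTime s q
    rw [ht] at hl ⊢
    rw [hG0]
    change f (flowQ 0 (cc s q 0) (Fin.tail (cc s q))) = f q
    have e1 : cc s q 0 = s := rfl
    have e2 : Fin.tail (cc s q) = q := rfl
    rw [e1, e2, (flow_of_lam hl).2]
  refine ⟨⟨fun z => G (flowTime z.1 z.2, cc z.1 z.2),
    G.continuous.comp (continuous_flowTime.prodMk hcc)⟩, ?_, ?_, ?_⟩
  · intro q; exact key 0 q (Or.inl rfl)
  · intro s q h; exact key s q (Or.inr h)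
  · rintro ⟨s, q⟩
    change p (G (flowTime s q, cc s q)) = H (s, q)
    rw [hG]
    change H (flowT (flowTime s q) (cc s q 0) (Fin.tail (cc s q)),
      flowQ (flowTime s q) (cc s q 0) (Fin.tail (cc s q))) = H (s, q)
    have e1 : cc s q 0 = s := rfl
    have e2 : Fin.tail (cc s q) = q := rfl
    have := flow_of_lam (lam_flowTime s q)
    rw [e1, e2, this.1, this.2]

/-! ### Paths in the space of generalized loops -/

section PathsInLoops

variable {k : ℕ} {X Y : Type} [TopologicalSpace X] [TopologicalSpace Y] {x : X} {y : Y}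

/-- Append a last coordinate. -/
def sn (t : I) (q : Fin k → I) : Fin (k + 1) → I := Fin.snoc (α := fun _ => I) q t

theorem continuous_sn : Continuous fun z : I × (Fin k → I) => sn z.1 z.2 :=
  Continuous.finSnoc (A := fun _ => I) continuous_snd continuous_fst

theorem sn_last (t : I) (q : Fin k → I) : sn t q (Fin.last k) = t := by
  simp [sn]

theorem sn_castSucc (t : I) (q : Fin k → I) (i : Fin k) : sn t q i.castSucc = q i := by
  simp [sn]

theorem sn_init (w : Fin (k + 1) → I) :
    sn (w (Fin.last k)) (fun i => w i.castSucc) = w := by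
  funext j
  refine Fin.lastCases ?_ (fun i => ?_) j
  · rw [sn_last]
  · rw [sn_castSucc]

theorem update_sn (t s : I) (q : Fin k → I) :
    Function.update (sn t q) (Fin.last k) s = sn s q := by
  funext j
  refine Fin.lastCases ?_ (fun i => ?_) j
  · rw [Function.update_self, sn_last]
  · rw [Function.update_of_ne (Fin.castSucc_ne_last i), sn_castSucc, sn_castSucc]

theorem sn_boundary_side {t : I} {q : Fin k → I} (h : q ∈ Cube.boundary (Fin k)) :
    sn t q ∈ Cube.boundary (Fin (k + 1)) := by
  obtain ⟨i, hi⟩ := h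
  exact ⟨i.castSucc, by rwa [sn_castSucc]⟩

theorem boundary_cases {w : Fin (k + 1) → I} (h : w ∈ Cube.boundary (Fin (k + 1))) :
    (w (Fin.last k) = 0 ∨ w (Fin.last k) = 1) ∨
      (fun i : Fin k => w i.castSucc) ∈ Cube.boundary (Fin k) := by
  obtain ⟨i, hi⟩ := h
  revert hi
  refine Fin.lastCases (fun h => Or.inl h) (fun i h => Or.inr ⟨i, h⟩) i

/-- A map of a cube, constant on the sides, as a path of generalized loops. -/
def mkPath (F : C((Fin (k + 1) → I), X)) {a b : GenLoop (Fin k) X x}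
    (hs : ∀ t, ∀ q ∈ Cube.boundary (Fin k), F (sn t q) = x)
    (h0 : ∀ q, F (sn 0 q) = a q) (h1 : ∀ q, F (sn 1 q) = b q) : Path a b where
  toFun t := ⟨(F.comp ⟨fun z : I × (Fin k → I) => sn z.1 z.2, continuous_sn⟩).curry t,
    fun q hq => hs t q hq⟩
  continuous_toFun := Continuous.subtype_mk (ContinuousMap.continuous _) _
  source' := by ext q; exact h0 q
  target' := by ext q; exact h1 q

theorem mkPath_apply (F : C((Fin (k + 1) → I), X)) {a b : GenLoop (Fin k) X x}
    (hs : ∀ t, ∀ q ∈ Cube.boundary (Fin k), F (sn t q) = x)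
    (h0 : ∀ q, F (sn 0 q) = a q) (h1 : ∀ q, F (sn 1 q) = b q) (t : I) (q : Fin k → I) :
    mkPath F hs h0 h1 t q = F (sn t q) := rfl

/-- A path of generalized loops as a map of a cube. -/
def unPath {a b : GenLoop (Fin k) X x} (γ : Path a b) : C((Fin (k + 1) → I), X) :=
  ⟨fun w => γ (w (Fin.last k)) (fun i => w i.castSucc), by fun_prop⟩

/-- A generalized loop as a path. -/
def glPath (c : GenLoop (Fin (k + 1)) X x) :
    Path (GenLoop.const : GenLoop (Fin k) X x) GenLoop.const :=
  mkPath c.1 (fun _ _ hq => c.2 _ (sn_boundary_side hq))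
    (fun q => c.2 _ ⟨Fin.last k, Or.inl (sn_last 0 q)⟩)
    (fun q => c.2 _ ⟨Fin.last k, Or.inr (sn_last 1 q)⟩)

theorem glPath_apply (c : GenLoop (Fin (k + 1)) X x) (t : I) (q : Fin k → I) :
    glPath c t q = c (sn t q) := rfl

theorem loopPath_ext {a b : GenLoop (Fin k) X x} {γ δ : Path a b}
    (h : ∀ t q, γ t q = δ t q) : γ = δ := by
  ext t q
  exact h t q

theorem glPath_transAt (f g : GenLoop (Fin (k + 1)) X x) :
    glPath (transAt (Fin.last k) f g) = (glPath f).trans (glPath g) := by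
  refine loopPath_ext fun t q => ?_
  rw [glPath_apply, transAt, coe_copy, Path.trans_apply]
  simp only [sn_last, update_sn]
  split_ifs with h
  · rw [glPath_apply, Set.projIcc_of_mem]
  · rw [glPath_apply, Set.projIcc_of_mem]

theorem glPath_symmAt (f : GenLoop (Fin (k + 1)) X x) :
    glPath (symmAt (Fin.last k) f) = (glPath f).symm := by
  refine loopPath_ext fun t q => ?_
  rw [glPath_apply, symmAt, coe_copy]
  change _ = f (sn (σ t) q)
  congr 1
  funext j
  refine Fin.lastCases ?_ (fun i => ?_) j
  · simp [sn_last]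
  · simp [sn_castSucc, Fin.castSucc_ne_last]

theorem loopHomotopy {a b : GenLoop (Fin k) X x} {γ δ : Path a b}
    (G : C(I × (Fin (k + 1) → I), X))
    (h0 : ∀ t q, G (0, sn t q) = γ t q) (h1 : ∀ t q, G (1, sn t q) = δ t q)
    (hb : ∀ s, ∀ w ∈ Cube.boundary (Fin (k + 1)), G (s, w) = G (0, w)) :
    γ.Homotopic δ := by
  let W : C((I × I) × (Fin k → I), X) := G.comp ⟨fun z => (z.1.1, sn z.1.2 z.2),
    (by fun_prop : Continuous fun z : (I × I) × (Fin k → I) => z.1.1).prodMk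
      (continuous_sn.comp (f := fun z : (I × I) × (Fin k → I) => (z.1.2, z.2)) (by fun_prop))⟩
  have hmem : ∀ z, W.curry z ∈ GenLoop (Fin k) X x := by
    intro z q hq
    change G (z.1, sn z.2 q) = x
    rw [hb _ _ (sn_boundary_side hq), h0]
    exact (γ z.2).2 q hq
  refine ⟨⟨⟨⟨fun z => ⟨W.curry z, hmem z⟩, ?_⟩, ?_, ?_⟩, ?_⟩⟩
  · exact Continuous.subtype_mk (ContinuousMap.continuous _) _
  · intro t; ext q; exact h0 t q
  · intro t; ext q; exact h1 t q
  · intro s t ht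
    ext q
    change G (s, sn t q) = γ t q
    rw [← h0]
    refine hb _ _ ⟨Fin.last k, ?_⟩
    rw [sn_last]
    exact ht

theorem glPath_homotopic {f g : GenLoop (Fin (k + 1)) X x} (h : GenLoop.Homotopic f g) :
    (glPath f).Homotopic (glPath g) := by
  obtain ⟨H⟩ := h
  refine loopHomotopy H.toContinuousMap (fun t q => H.apply_zero _) (fun t q => H.apply_one _) ?_
  intro s w hw
  exact (H.eq_fst s hw).trans (H.eq_fst 0 hw).symm

/-- Composition with a pointed map, as a continuous map on generalized loops. -/
theorem continuous_genLoopMap (f : C(Y, X)) (hf : f y = x) :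
    Continuous (genLoopMap (Fin k) f hf) :=
  Continuous.subtype_mk ((ContinuousMap.continuous_postcomp f).comp continuous_subtype_val) _

/-- Composition with a pointed map on paths of generalized loops. -/
def mapPath (f : C(Y, X)) (hf : f y = x) {a b : GenLoop (Fin k) Y y} {a' b' : GenLoop (Fin k) X x}
    (ha : a' = genLoopMap (Fin k) f hf a) (hb : b' = genLoopMap (Fin k) f hf b)
    (γ : Path a b) : Path a' b' :=
  (γ.map (continuous_genLoopMap f hf)).cast ha hb

theorem mapPath_apply (f : C(Y, X)) (hf : f y = x) {a b : GenLoop (Fin k) Y y}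
    {a' b' : GenLoop (Fin k) X x}
    (ha : a' = genLoopMap (Fin k) f hf a) (hb : b' = genLoopMap (Fin k) f hf b)
    (γ : Path a b) (t : I) (q : Fin k → I) : mapPath f hf ha hb γ t q = f (γ t q) := rfl

theorem mapPath_trans (f : C(Y, X)) (hf : f y = x) {a b c : GenLoop (Fin k) Y y}
    {a' b' c' : GenLoop (Fin k) X x}
    (ha : a' = genLoopMap (Fin k) f hf a) (hb : b' = genLoopMap (Fin k) f hf b)
    (hc : c' = genLoopMap (Fin k) f hf c)
    (γ : Path a b) (δ : Path b c) : mapPath f hf ha hc (γ.trans δ) =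
      (mapPath f hf ha hb γ).trans (mapPath f hf hb hc δ) := by
  subst ha hb hc
  exact Path.map_trans γ δ (continuous_genLoopMap f hf)

theorem mapPath_symm (f : C(Y, X)) (hf : f y = x) {a b : GenLoop (Fin k) Y y}
    {a' b' : GenLoop (Fin k) X x}
    (ha : a' = genLoopMap (Fin k) f hf a) (hb : b' = genLoopMap (Fin k) f hf b)
    (γ : Path a b) : mapPath f hf hb ha γ.symm = (mapPath f hf ha hb γ).symm := by
  subst ha hb
  rfl

theorem lift_path {f : C(Y, X)} (hfib : IsSerreFibration f) (hf : f y = x)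
    {a b : GenLoop (Fin k) Y y} {a' b' : GenLoop (Fin k) X x}
    (ha : a' = genLoopMap (Fin k) f hf a) (hb : b' = genLoopMap (Fin k) f hf b)
    (γ : Path a b) (δ : Path a' b') (h : (mapPath f hf ha hb γ).Homotopic δ) :
    ∃ ε : Path a b, mapPath f hf ha hb ε = δ ∧ ε.Homotopic γ := by
  obtain ⟨K⟩ := h
  let H : C(I × (Fin (k + 1) → I), X) :=
    ⟨fun z => K (z.1, z.2 (Fin.last k)) (fun i => z.2 i.castSucc), by fun_prop⟩
  have hH0 : ∀ w, H (0, w) = f (unPath γ w) := by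
    intro w
    change K (0, _) _ = _
    rw [K.apply_zero]
    rfl
  obtain ⟨G, hG0, hGb, hG⟩ := hfib.lift_rel (unPath γ) H hH0 (by
    intro s w hw
    rw [← hH0]
    change K (s, _) _ = K (0, _) _
    rcases boundary_cases hw with h | h
    · rw [K.eq_fst s (by exact h), K.eq_fst 0 (by exact h)]
    · rw [(K _).2 _ h |> (fun e => (show K (s, w (Fin.last k)) _ = x from e)),
        (K _).2 _ h |> (fun e => (show K (0, w (Fin.last k)) _ = x from e))])
  have hun : ∀ t q, unPath γ (sn t q) = γ t q := by
    intro t q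
    change γ (sn t q (Fin.last k)) (fun i => sn t q i.castSucc) = _
    simp only [sn_last, sn_castSucc]
  have hend : ∀ t q, sn t q ∈ Cube.boundary (Fin (k + 1)) → G (1, sn t q) = γ t q := by
    intro t q h
    rw [hGb _ _ h, hun]
  let ε : Path a b := mkPath (G.comp ⟨fun w => (1, w), by fun_prop⟩)
    (fun t q hq => by
      refine (hend t q (sn_boundary_side hq)).trans ?_
      exact (γ t).2 q hq)
    (fun q => by
      refine (hend 0 q ⟨Fin.last k, Or.inl (sn_last 0 q)⟩).trans ?_
      rw [γ.source])
    (fun q => by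
      refine (hend 1 q ⟨Fin.last k, Or.inr (sn_last 1 q)⟩).trans ?_
      rw [γ.target])
  refine ⟨ε, ?_, ?_⟩
  · refine loopPath_ext fun t q => ?_
    rw [mapPath_apply]
    change f (G (1, sn t q)) = _
    rw [hG]
    change K (1, sn t q (Fin.last k)) (fun i => sn t q i.castSucc) = _
    simp only [sn_last, sn_castSucc]
    rw [K.apply_one]
    rfl
  · refine Path.Homotopic.symm (loopHomotopy G (fun t q => ?_) (fun t q => rfl) ?_)
    · rw [hG0, hun]
    · intro s w hw
      rw [hGb s w hw, hGb 0 w hw]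

end PathsInLoops

open CategoryTheory in
theorem groupoid_algebra {C : Type} [Groupoid C] {z a a' : C} (B b : z ⟶ a) (B' b' : z ⟶ a')
    (G g : z ⟶ z)
    (h : B' ≫ Groupoid.inv b' = G ≫ (B ≫ Groupoid.inv b) ≫ Groupoid.inv g) :
    Groupoid.inv b ≫ Groupoid.inv g ≫ b' = Groupoid.inv B ≫ Groupoid.inv G ≫ B' := by
  have h2 : B' = (G ≫ (B ≫ Groupoid.inv b) ≫ Groupoid.inv g) ≫ b' := by
    rw [← h]; simp
  rw [h2]; simp

theorem path_algebra {Z : Type} [TopologicalSpace Z] {z a a' : Z} (B b : Path z a)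
    (B' b' : Path z a') (G g : Path z z)
    (h : (B'.trans b'.symm).Homotopic (G.trans ((B.trans b.symm).trans g.symm))) :
    (b.symm.trans (g.symm.trans b')).Homotopic (B.symm.trans (G.symm.trans B')) := by
  have h' := Path.Homotopic.Quotient.eq.2 h
  apply Path.Homotopic.Quotient.exact
  exact groupoid_algebra (C := FundamentalGroupoid Z) (z := ⟨z⟩) (a := ⟨a⟩) (a' := ⟨a'⟩)
    (Path.Homotopic.Quotient.mk B) (Path.Homotopic.Quotient.mk b)
    (Path.Homotopic.Quotient.mk B') (Path.Homotopic.Quotient.mk b')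
    (Path.Homotopic.Quotient.mk G) (Path.Homotopic.Quotient.mk g) h'

section Glue

variable {k : ℕ} {X Y : Type} [TopologicalSpace X] [TopologicalSpace Y] {x : X} {y : Y}

/-- A nullhomotopy as a path of generalized loops. -/
def nullPath {α : GenLoop (Fin k) X x} {β : C((Fin (k + 1) → I), X)} (h : IsNullhomotopy α β) :
    Path (GenLoop.const : GenLoop (Fin k) X x) α :=
  mkPath β (fun t q hq => h.2.2 _ (by
      obtain ⟨i, hi⟩ := hq
      exact ⟨i, by rwa [sn_castSucc]⟩))
    (fun q => h.1 _ (sn_last 0 q))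
    (fun q => by
      rw [h.2.1 _ (sn_last 1 q)]
      simp only [sn_castSucc])

theorem glPath_glued {a : GenLoop (Fin k) X x} {b : GenLoop (Fin k) Y y}
    {β : C((Fin (k + 1) → I), X)} {β' : C((Fin (k + 1) → I), Y)} {f : C(Y, X)}
    {c : GenLoop (Fin (k + 1)) X x}
    (h : IsNullhomotopy a β) (h' : IsNullhomotopy b β') (hf : f y = x)
    (hz : (GenLoop.const : GenLoop (Fin k) X x) = genLoopMap (Fin k) f hf GenLoop.const)
    (ha : a = genLoopMap (Fin k) f hf b) (hc : IsGluedWithReverse β f β' c) :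
    glPath c = (nullPath h).trans (mapPath f hf hz ha (nullPath h')).symm := by
  refine loopPath_ext fun t q => ?_
  rw [glPath_apply, hc, Path.trans_apply]
  simp only [sn_last, update_sn]
  split_ifs with ht
  · change _ = β (sn _ q)
    rw [Set.projIcc_of_mem]
  · change _ = f (β' (sn (σ _) q))
    congr 3
    have h2 := t.2.2
    push Not at ht
    rw [Set.projIcc_of_mem zero_le_one ⟨by linarith, by linarith⟩]
    apply Subtype.ext
    rw [unitInterval.coe_symm_eq]
    ring

end Glue

/-- **Proposition 4.7 (`φ̃` is injective).**  Let `(X n, p n)` be a tower of fibrations of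
pointed topological spaces, with basepoints the components `x n` of a chosen point of the
inverse limit, and let `k ≥ 0`.  Then `φ̃ : Ker P → lim¹_n π_{k+1} X_n` is injective: if
`α, ᾱ : I^k → lim_n X_n` send `∂I^k` to the basepoint, their classes lie in the kernel of
`P : π_k (lim_n X_n) → lim_n π_k X_n`, and `φ̃([α]) = φ̃([ᾱ])` — i.e. for some (equivalently,
by Proposition 4.3, any) choices of families of nullhomotopies `β`, `β̄` of their
projections, the glued families `([β_n * (p_{n+1} ∘ β_{n+1}⁻¹)])_n` and
`([β̄_n * (p_{n+1} ∘ β̄_{n+1}⁻¹)])_n` lie in the same `lim¹`-orbit — then `α` and `ᾱ` are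
homotopic relative to `∂I^k`, i.e. `[α] = [ᾱ]` in `π_k (lim_n X_n)`. -/
theorem phiTilde_injective
    (X : ℕ → Type) [∀ n, TopologicalSpace (X n)] (p : ∀ n, C(X (n + 1), X n))
    (hfib : ∀ n, IsSerreFibration (p n))
    (x : ∀ n, X n) (hx : ∀ n, p n (x (n + 1)) = x n)
    (k : ℕ)
    (α α' : GenLoop (Fin k) (TowerLim X p) (⟨x, hx⟩ : TowerLim X p))
    (hker : ∀ n, piProjMap k hx n (piCls α) = piConst (Fin k) (x n))
    (hker' : ∀ n, piProjMap k hx n (piCls α') = piConst (Fin k) (x n))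
    (β β' : ∀ n, C((Fin (k + 1) → I), X n))
    (hβ : ∀ n, IsNullhomotopy (genLoopMap (Fin k) (TowerLim.proj n) rfl α) (β n))
    (hβ' : ∀ n, IsNullhomotopy (genLoopMap (Fin k) (TowerLim.proj n) rfl α') (β' n))
    (c c' : ∀ n, GenLoop (Fin (k + 1)) (X n) (x n))
    (hc : ∀ n, IsGluedWithReverse (β n) (p n) (β (n + 1)) (c n))
    (hc' : ∀ n, IsGluedWithReverse (β' n) (p n) (β' (n + 1)) (c' n))
    (horbit : ∃ g : ∀ n, HomotopyGroup (Fin (k + 1)) (X n) (x n),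
      ∀ n, piCls (c' n)
        = (piTowerMap (k + 1) hx n (g (n + 1)))⁻¹ * piCls (c n) * g n) :
    GenLoop.Homotopic α α' := by
  obtain ⟨g, hg⟩ := horbit
  choose γ hγ using fun n => Quotient.exists_rep (g n)
  let a : ∀ n, GenLoop (Fin k) (X n) (x n) := fun n =>
    genLoopMap (Fin k) (TowerLim.proj n) rfl α
  let a' : ∀ n, GenLoop (Fin k) (X n) (x n) := fun n =>
    genLoopMap (Fin k) (TowerLim.proj n) rfl α'
  have ha : ∀ n, a n = genLoopMap (Fin k) (p n) (hx n) (a (n + 1)) := by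
    intro n; ext q; exact ((α.1 q).2 n).symm
  have ha' : ∀ n, a' n = genLoopMap (Fin k) (p n) (hx n) (a' (n + 1)) := by
    intro n; ext q; exact ((α'.1 q).2 n).symm
  have hz : ∀ n, (GenLoop.const : GenLoop (Fin k) (X n) (x n)) =
      genLoopMap (Fin k) (p n) (hx n) GenLoop.const := by
    intro n; ext q; exact (hx n).symm
  let B : ∀ n, Path (GenLoop.const : GenLoop (Fin k) (X n) (x n)) (a n) := fun n =>
    nullPath (hβ n)
  let B' : ∀ n, Path (GenLoop.const : GenLoop (Fin k) (X n) (x n)) (a' n) := fun n =>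
    nullPath (hβ' n)
  have hcB : ∀ n, glPath (c n) =
      (B n).trans (mapPath (p n) (hx n) (hz n) (ha n) (B (n + 1))).symm := fun n =>
    glPath_glued (hβ n) (hβ (n + 1)) (hx n) (hz n) (ha n) (hc n)
  have hcB' : ∀ n, glPath (c' n) =
      (B' n).trans (mapPath (p n) (hx n) (hz n) (ha' n) (B' (n + 1))).symm := fun n =>
    glPath_glued (hβ' n) (hβ' (n + 1)) (hx n) (hz n) (ha' n) (hc' n)
  let D : ∀ n, Path (a n) (a' n) := fun n =>
    (B n).symm.trans ((glPath (γ n)).symm.trans (B' n))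
  have hD : ∀ n, (mapPath (p n) (hx n) (ha n) (ha' n) (D (n + 1))).Homotopic (D n) := by
    intro n
    have e : mapPath (p n) (hx n) (ha n) (ha' n) (D (n + 1)) =
        (mapPath (p n) (hx n) (hz n) (ha n) (B (n + 1))).symm.trans
          ((mapPath (p n) (hx n) (hz n) (hz n) (glPath (γ (n + 1)))).symm.trans
            (mapPath (p n) (hx n) (hz n) (ha' n) (B' (n + 1)))) := by
      rw [mapPath_trans _ _ _ (hz n), mapPath_trans _ _ _ (hz n), mapPath_symm, mapPath_symm]
    rw [e]
    apply path_algebra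
    rw [← hcB, ← hcB']
    have e2 : mapPath (p n) (hx n) (hz n) (hz n) (glPath (γ (n + 1))) =
        glPath (genLoopMap (Fin (k + 1)) (p n) (hx n) (γ (n + 1))) := rfl
    rw [e2, ← glPath_symmAt, ← glPath_transAt, ← glPath_transAt]
    apply glPath_homotopic
    refine Quotient.exact (s := GenLoop.Homotopic.setoid (Fin (k + 1)) (x n)) ?_
    refine (hg n).trans ?_
    rw [← hγ n, ← hγ (n + 1)]
    have e3 : (piTowerMap (k + 1) hx n
        (Quotient.mk (GenLoop.Homotopic.setoid (Fin (k + 1)) (x (n + 1))) (γ (n + 1)))) =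
        (Quotient.mk (GenLoop.Homotopic.setoid (Fin (k + 1)) (x n))
          (genLoopMap (Fin (k + 1)) (p n) (hx n) (γ (n + 1)))) := rfl
    rw [e3]
    have i1 := HomotopyGroup.inv_spec (i := Fin.last k)
      (p := genLoopMap (Fin (k + 1)) (p n) (hx n) (γ (n + 1)))
    have i2 := HomotopyGroup.mul_spec (i := Fin.last k)
      (p := symmAt (Fin.last k) (genLoopMap (Fin (k + 1)) (p n) (hx n) (γ (n + 1)))) (q := c n)
    have i3 := HomotopyGroup.mul_spec (i := Fin.last k) (q := γ n)
      (p := transAt (Fin.last k) (c n)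
        (symmAt (Fin.last k) (genLoopMap (Fin (k + 1)) (p n) (hx n) (γ (n + 1)))))
    refine Eq.trans ?_ i3
    refine congrArg (fun z : HomotopyGroup (Fin (k + 1)) (X n) (x n) => z *
      piCls (γ n)) ?_
    refine Eq.trans ?_ i2
    exact congrArg (fun z : HomotopyGroup (Fin (k + 1)) (X n) (x n) => z * piCls (c n)) i1
  have step : ∀ n (δ : {δ : Path (a n) (a' n) // δ.Homotopic (D n)}),
      ∃ ε : {ε : Path (a (n + 1)) (a' (n + 1)) // ε.Homotopic (D (n + 1))},
        mapPath (p n) (hx n) (ha n) (ha' n) ε.1 = δ.1 := by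
    rintro n ⟨δ, hδ⟩
    obtain ⟨ε, h1, h2⟩ := lift_path (hfib n) (hx n) (ha n) (ha' n) (D (n + 1)) δ
      ((hD n).trans hδ.symm)
    exact ⟨⟨ε, h2⟩, h1⟩
  choose s hs using step
  let δ : ∀ n, {δ : Path (a n) (a' n) // δ.Homotopic (D n)} := fun n =>
    Nat.rec ⟨D 0, Path.Homotopic.refl _⟩ (fun n d => s n d) n
  have hδ : ∀ n t q, p n ((δ (n + 1)).1 t q) = (δ n).1 t q := by
    intro n t q
    rw [← mapPath_apply (p n) (hx n) (ha n) (ha' n)]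
    exact congrArg (fun e : Path (a n) (a' n) => e t q) (hs n (δ n))
  refine ⟨⟨⟨⟨fun z => ⟨fun n => (δ n).1 z.1 z.2, fun n => hδ n z.1 z.2⟩, ?_⟩, ?_, ?_⟩, ?_⟩⟩
  · refine Continuous.subtype_mk (continuous_pi fun n => ?_) _
    fun_prop
  · intro q
    refine Subtype.ext (funext fun n => ?_)
    change (δ n).1 0 q = _
    rw [(δ n).1.source]; rfl
  · intro q
    refine Subtype.ext (funext fun n => ?_)
    change (δ n).1 1 q = _
    rw [(δ n).1.target]; rfl
  · intro t q hq
    have e : α.1 q = _ := α.2 q hq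
    refine Eq.trans ?_ e.symm
    refine Subtype.ext (funext fun n => ?_)
    exact ((δ n).1 t).2 q hq

end
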